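/- Let k ≥ 2 and let F ⊆ P(X) be a saturated k-Sperner system on a finite set X with |X| = n > 2^{|F|}, of minimum cardinality among all saturated k-Sperner systems in P(X), with homogeneous atom H and canonical decomposition (A_i)_{i=0}^{k-1}. Then every member of A₁^small is a singleton, |A₁^small| ≥ k−2, and |A₁^large| = 1. Symmetrically, every member of A_{k-2}^large has cardinality n−1, |A_{k-2}^large| ≥ k−2, and |A_{k-2}^small| = 1. -/

import Mathlib

open Finset

/-- A family contains a chain of `m` sets `C 0 ⊊ C 1 ⊊ ⋯ ⊊ C (m-1)`. -/
def HasChainOfLen {α : Type*} [DecidableEq α] (F : Finset (Finset α)) (m : ℕ) : Prop :=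
  ∃ C : Fin m → Finset α, StrictMono C ∧ ∀ i, C i ∈ F

/-- `F ⊆ P(X)` is a saturated `k`-Sperner system: it has no chain of `k+1` sets,
and adding any `S ⊆ X` with `S ∉ F` creates a chain of `k+1` sets. -/
def IsSatKSperner {α : Type*} [DecidableEq α] (X : Finset α) (F : Finset (Finset α))
    (k : ℕ) : Prop :=
  (∀ A ∈ F, A ⊆ X) ∧ ¬ HasChainOfLen F (k + 1) ∧
    ∀ S ⊆ X, S ∉ F → HasChainOfLen (insert S F) (k + 1)

/-- `H` is a homogeneous atom for `F` in `P(X)`: `H ⊆ X` is maximal with the property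
that every member of `F` contains all of `H` or none of it, and `|H| ≥ 2`. -/
def IsHomogAtom {α : Type*} [DecidableEq α] (X : Finset α) (F : Finset (Finset α))
    (H : Finset α) : Prop :=
  H ⊆ X ∧ (∀ S ∈ F, S ∩ H = ∅ ∨ S ∩ H = H) ∧
    (∀ B ⊆ X, (∀ S ∈ F, S ∩ B = ∅ ∨ S ∩ B = B) → H ⊆ B → H = B) ∧
    2 ≤ H.card

/-- The small members of `F` (those disjoint from the homogeneous atom `H`). -/
def smallSets {α : Type*} [DecidableEq α] (F : Finset (Finset α)) (H : Finset α) :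
    Finset (Finset α) :=
  F.filter fun S => S ∩ H = ∅

/-- The large members of `F` (those containing the homogeneous atom `H`). -/
def largeSets {α : Type*} [DecidableEq α] (F : Finset (Finset α)) (H : Finset α) :
    Finset (Finset α) :=
  F.filter fun S => H ⊆ S

/-- The minimal elements (under inclusion) of a family of sets. -/
def minimalsIn {α : Type*} [DecidableEq α] (G : Finset (Finset α)) : Finset (Finset α) :=
  G.filter fun A => ∀ B ∈ G, B ⊆ A → B = A

/-- What remains of `F` after stripping off minimal elements `i` times. -/
def canonRest {α : Type*} [DecidableEq α] (F : Finset (Finset α)) : ℕ → Finset (Finset α)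
  | 0 => F
  | i + 1 => canonRest F i \ minimalsIn (canonRest F i)

/-- The canonical decomposition of `F` into antichains:
`canonDecomp F i` is the family of minimal elements of `F \ ⋃_{j<i} canonDecomp F j`. -/
def canonDecomp {α : Type*} [DecidableEq α] (F : Finset (Finset α)) (i : ℕ) :
    Finset (Finset α) :=
  minimalsIn (canonRest F i)

/-- A sequence `(D i)_{i=0}^t` of families is layered if for `1 ≤ i ≤ t`,
every member of `D i` strictly contains some member of `D (i-1)`. -/
def Layered {α : Type*} [DecidableEq α] (D : ℕ → Finset (Finset α)) (t : ℕ) : Prop :=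
  ∀ i, 1 ≤ i → i ≤ t → ∀ A ∈ D i, ∃ B ∈ D (i - 1), B ⊂ A

/-!
The canonical decomposition of a saturated `k`-Sperner system with a homogeneous atom `H` is a
layered sequence of saturated antichains, and conversely the union of any such sequence of length
`k` is a saturated `k`-Sperner system. So a system of minimum size has a canonical decomposition of
minimum total size among all such sequences.

Given `L ∈ A₁`, replacing `A₀` by `{∅}` and `A₁` by `{L} ∪ {{x} | x ∈ X \ L}` gives another such
sequence, whence `|A₁| ≤ |X \ L| + 1`. If `L` is large, then every `x ∈ X \ L` lies in a small
member of `A₁` contained in `L ∪ {x}`, because a set containing `H` and no small member of `A₁` lies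
in a large one; hence `|A₁^small| ≥ |X \ L|`, and `L` is the only large member of `A₁`. If now `A`
were a small member with two elements, each `A \ {a}` would lie in `L`, hence so would `A`.

The claims on `A_{k-2}` follow by taking complements in `X`, which reverses the sequence.
-/

lemma injective_of_strictMono_of_isAntichain {ι κ β : Type*} [LinearOrder ι] [PartialOrder β]
    {C : ι → β} (hC : StrictMono C) {E : κ → Set β} (hE : ∀ a, IsAntichain (· ≤ ·) (E a))
    {f : ι → κ} (hf : ∀ a, C a ∈ E (f a)) : Function.Injective f := by
  intro a b hab
  wlog hle : a ≤ b generalizing a b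
  · exact (this hab.symm (le_of_not_ge hle)).symm
  exact hC.injective ((hE (f a)).eq (hf a) (hab ▸ hf b) (hC.monotone hle))

section

variable {α : Type*} [DecidableEq α] {X S T A B H L : Finset α} {F G 𝒜 : Finset (Finset α)}
  {D : ℕ → Finset (Finset α)} {t i m k : ℕ}

/-! ### Chains and the canonical decomposition -/

lemma mem_minimalsIn : A ∈ minimalsIn G ↔ A ∈ G ∧ ∀ B ∈ G, B ⊆ A → B = A := by
  simp [minimalsIn]

lemma canonDecomp_eq_sdiff : canonDecomp F i = canonRest F i \ canonRest F (i + 1) :=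
  (Finset.sdiff_sdiff_eq_self (filter_subset _ _)).symm

lemma canonRest_antitone (F : Finset (Finset α)) : Antitone (canonRest F) :=
  antitone_nat_of_succ_le fun _ => sdiff_subset

lemma canonRest_subset : canonRest F i ⊆ F :=
  canonRest_antitone F (Nat.zero_le i)

lemma canonDecomp_subset : canonDecomp F i ⊆ F :=
  (filter_subset _ _).trans canonRest_subset

lemma exists_ssubset_of_mem_canonRest_succ (hA : A ∈ canonRest F (i + 1)) :
    ∃ B ∈ canonRest F i, B ⊂ A := by
  obtain ⟨hAi, hnot⟩ := mem_sdiff.1 hA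
  rw [mem_minimalsIn] at hnot
  push Not at hnot
  obtain ⟨B, hB, hBA, hne⟩ := hnot hAi
  exact ⟨B, hB, hBA.ssubset_of_ne hne⟩

lemma mem_canonRest_of_subset (hB : B ∈ canonRest F i) (hBA : B ⊆ A) (hA : A ∈ F) :
    A ∈ canonRest F i := by
  induction i generalizing B with
  | zero => exact hA
  | succ i ih =>
    obtain ⟨C, hC, hCB⟩ := exists_ssubset_of_mem_canonRest_succ hB
    have hCA : C ⊂ A := hCB.trans_subset hBA
    exact mem_sdiff.2 ⟨ih hC hCA.subset, fun h => hCA.ne ((mem_minimalsIn.1 h).2 C hC hCA.subset)⟩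

lemma mem_canonRest_succ : A ∈ canonRest F (i + 1) ↔ A ∈ F ∧ ∃ B ∈ canonRest F i, B ⊂ A := by
  refine ⟨fun hA => ⟨canonRest_subset hA, exists_ssubset_of_mem_canonRest_succ hA⟩, ?_⟩
  rintro ⟨hA, B, hB, hBA⟩
  exact mem_sdiff.2 ⟨mem_canonRest_of_subset hB hBA.subset hA,
    fun h => hBA.ne ((mem_minimalsIn.1 h).2 B hB hBA.subset)⟩

lemma hasChainOfLen_of_head_mem_canonRest {C : Fin (m + 1) → Finset α} (hC : StrictMono C)
    (hCF : ∀ j, C j ∈ F) (h0 : C 0 ∈ canonRest F i) : HasChainOfLen F (i + m + 1) := by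
  induction i generalizing m with
  | zero => exact ⟨C ∘ Fin.cast (by omega), hC.comp (Fin.cast_strictMono _), fun j => hCF _⟩
  | succ i ih =>
    obtain ⟨-, B, hB, hBC⟩ := mem_canonRest_succ.1 h0
    rw [Nat.succ_add_eq_add_succ]
    exact ih (C := Matrix.vecCons B C) (hC.vecCons hBC)
      (Fin.cases (canonRest_subset hB) hCF) hB

lemma hasChainOfLen_succ_iff : HasChainOfLen F (m + 1) ↔ (canonRest F m).Nonempty := by
  constructor
  · rintro ⟨C, hC, hCF⟩
    have hmem (j : Fin (m + 1)) : C j ∈ canonRest F j := by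
      induction j using Fin.induction with
      | zero => exact hCF 0
      | succ j ih => exact mem_canonRest_succ.2 ⟨hCF _, _, ih, hC j.castSucc_lt_succ⟩
    exact ⟨_, hmem (Fin.last m)⟩
  · rintro ⟨A, hA⟩
    exact hasChainOfLen_of_head_mem_canonRest (m := 0) (C := fun _ => A)
      (Subsingleton.strictMono (α := Fin 1) _) (fun _ => canonRest_subset hA) hA

lemma isAntichain_canonDecomp : IsAntichain (· ⊆ ·) (canonDecomp F i : Set (Finset α)) :=
  fun _ hA _ hB hne hAB => hne ((mem_minimalsIn.1 hB).2 _ (mem_minimalsIn.1 hA).1 hAB)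

lemma pairwise_disjoint_canonDecomp (F : Finset (Finset α)) :
    Pairwise (Function.onFun Disjoint (canonDecomp F)) := by
  rw [pairwise_disjoint_on]
  intro i j hij
  rw [canonDecomp_eq_sdiff]
  exact disjoint_sdiff_self_left.mono_right
    ((filter_subset _ _).trans (canonRest_antitone F hij))

lemma sum_card_canonDecomp_le (F : Finset (Finset α)) (m : ℕ) :
    ∑ i ∈ range m, #(canonDecomp F i) ≤ #F := by
  rw [← card_biUnion fun i _ j _ hij => pairwise_disjoint_canonDecomp F hij]
  exact card_le_card (biUnion_subset.2 fun i _ => canonDecomp_subset)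

lemma exists_mem_canonDecomp (hF : ¬ HasChainOfLen F (m + 1)) (hA : A ∈ F) :
    ∃ i : Fin m, A ∈ canonDecomp F i := by
  by_contra! hnot
  have hrest (i : ℕ) (hi : i ≤ m) : A ∈ canonRest F i := by
    induction i with
    | zero => exact hA
    | succ i ih =>
      exact mem_sdiff.2 ⟨ih (by omega), hnot ⟨i, hi⟩⟩
  exact hF (hasChainOfLen_succ_iff.2 ⟨A, hrest m le_rfl⟩)

lemma layered_iff_forall_succ :
    Layered D t ↔ ∀ i < t, ∀ A ∈ D (i + 1), ∃ B ∈ D i, B ⊂ A := by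
  refine ⟨fun h i hi => h (i + 1) (by omega) hi, fun h i h1 hi => ?_⟩
  obtain ⟨i, rfl⟩ := Nat.exists_eq_add_of_le' h1
  exact h i hi

lemma layered_canonDecomp (F : Finset (Finset α)) (t : ℕ) : Layered (canonDecomp F) t := by
  refine layered_iff_forall_succ.2 fun i _ A hA => ?_
  obtain ⟨hA, hA'⟩ := mem_minimalsIn.1 hA
  obtain ⟨-, B, hB, hBA⟩ := mem_canonRest_succ.1 hA
  refine ⟨B, ?_, hBA⟩
  rw [canonDecomp_eq_sdiff, mem_sdiff]
  exact ⟨hB, fun h => hBA.ne (hA' B h hBA.subset)⟩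

lemma Layered.subset_canonRest (h : Layered D t) (hD : ∀ i ≤ t, D i ⊆ G) (hi : i ≤ t) :
    D i ⊆ canonRest G i := by
  induction i with
  | zero => exact hD 0 hi
  | succ i ih =>
    intro A hA
    obtain ⟨B, hB, hBA⟩ := layered_iff_forall_succ.1 h i hi A hA
    exact mem_canonRest_succ.2 ⟨hD _ hi hA, B, ih (by omega) hB, hBA⟩

lemma Layered.le_card (h : Layered D t) (hi : i ≤ t) (hA : A ∈ D i) : i ≤ #A := by
  induction i generalizing A with
  | zero => exact Nat.zero_le _
  | succ i ih =>
    obtain ⟨B, hB, hBA⟩ := layered_iff_forall_succ.1 h i hi A hA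
    exact (ih (by omega) hB).trans_lt (card_lt_card hBA)

lemma not_hasChainOfLen_biUnion
    (hD : ∀ i < m, IsAntichain (· ⊆ ·) (D i : Set (Finset α))) :
    ¬ HasChainOfLen ((range m).biUnion D) (m + 1) := by
  rintro ⟨C, hC, hCD⟩
  simp only [mem_biUnion, mem_range] at hCD
  choose f hfm hf using hCD
  have hinj : Function.Injective fun a => (⟨f a, hfm a⟩ : Fin m) :=
    injective_of_strictMono_of_isAntichain hC (E := fun a => D a.1) (fun a => hD a.1 a.2) hf
  simpa using Fintype.card_le_of_injective _ hinj

/-! ### Layered sequences of saturated antichains -/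

/-- A saturated antichain in `P(X)`, that is, a saturated `1`-Sperner system. -/
structure IsSatAntichain (X : Finset α) (𝒜 : Finset (Finset α)) : Prop where
  subset : ∀ A ∈ 𝒜, A ⊆ X
  isAntichain : IsAntichain (· ⊆ ·) (𝒜 : Set (Finset α))
  exists_comparable : ∀ S ⊆ X, ∃ A ∈ 𝒜, A ⊆ S ∨ S ⊆ A

/-- A layered sequence `D 0, …, D t` of saturated antichains in `P(X)`. The values `D i` with
`t < i` are irrelevant. -/
structure IsSatLayering (X : Finset α) (D : ℕ → Finset (Finset α)) (t : ℕ) : Prop where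
  layered : Layered D t
  isSatAntichain : ∀ i ≤ t, IsSatAntichain X (D i)

/-- A layered sequence of `t + 1` saturated antichains of minimum total size. -/
structure IsMinSatLayering (X : Finset α) (D : ℕ → Finset (Finset α)) (t : ℕ) : Prop
    extends IsSatLayering X D t where
  sum_card_le : ∀ E, IsSatLayering X E t →
    ∑ i ∈ range (t + 1), #(D i) ≤ ∑ i ∈ range (t + 1), #(E i)

namespace IsSatLayering

lemma exists_ssubset_succ (h : IsSatLayering X D t) (hi : i < t) (hA : A ∈ D i) :
    ∃ B ∈ D (i + 1), A ⊂ B := by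
  have hi' := h.isSatAntichain i hi.le
  obtain ⟨B, hB, hcomp⟩ := (h.isSatAntichain (i + 1) hi).exists_comparable A (hi'.subset A hA)
  obtain ⟨C, hC, hCB⟩ := layered_iff_forall_succ.1 h.layered i hi B hB
  have hBA : ¬ B ⊆ A := fun hBA =>
    (hCB.trans_subset hBA).ne (hi'.isAntichain.eq hC hA (hCB.subset.trans hBA))
  exact ⟨B, hB, hcomp.resolve_left hBA, hBA⟩

/-- Climb the layers: as long as some member of `D i` lies strictly below `S`, the set `S` can still
be inserted higher up; once `S` has been inserted, each further layer prolongs the chain. -/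
lemma mem_canonRest_succ_or_ssubset (h : IsSatLayering X D t) (hD : ∀ i ≤ t, D i ⊆ G)
    (hSX : S ⊆ X) (hSG : S ∈ G) (hSD : ∀ i ≤ t, S ∉ D i) (hi : i ≤ t) :
    (∃ A ∈ D i, A ∈ canonRest G (i + 1)) ∨ ∃ A ∈ D i, A ⊂ S := by
  have hcomp (i : ℕ) (hi : i ≤ t) : ∃ A ∈ D i, A ⊂ S ∨ S ⊂ A := by
    obtain ⟨A, hA, hAS⟩ := (h.isSatAntichain i hi).exists_comparable S hSX
    have hne : A ≠ S := fun e => hSD i hi (e ▸ hA)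
    exact ⟨A, hA, hAS.imp (·.ssubset_of_ne hne) (·.ssubset_of_ne hne.symm)⟩
  induction i with
  | zero =>
    obtain ⟨A, hA, hAS | hSA⟩ := hcomp 0 hi
    · exact .inr ⟨A, hA, hAS⟩
    · exact .inl ⟨A, hA, mem_canonRest_succ.2 ⟨hD 0 hi hA, S, hSG, hSA⟩⟩
  | succ i ih =>
    obtain ⟨A, hA, hAG⟩ | ⟨A, hA, hAS⟩ := ih (by omega)
    · obtain ⟨B, hB, hAB⟩ := h.exists_ssubset_succ hi hA
      exact .inl ⟨B, hB, mem_canonRest_succ.2 ⟨hD _ hi hB, A, hAG, hAB⟩⟩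
    · obtain ⟨B, hB, hBS | hSB⟩ := hcomp (i + 1) hi
      · exact .inr ⟨B, hB, hBS⟩
      · have hAi := h.layered.subset_canonRest hD (by omega) hA
        have hS := mem_canonRest_succ.2 ⟨hSG, A, hAi, hAS⟩
        exact .inl ⟨B, hB, mem_canonRest_succ.2 ⟨hD _ hi hB, S, hS, hSB⟩⟩

theorem isSatKSperner_biUnion (h : IsSatLayering X D t) :
    IsSatKSperner X ((range (t + 1)).biUnion D) (t + 1) := by
  refine ⟨?_, not_hasChainOfLen_biUnion fun i hi =>
    (h.isSatAntichain i (by omega)).isAntichain, ?_⟩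
  · intro A hA
    obtain ⟨i, hi, hA⟩ := mem_biUnion.1 hA
    exact (h.isSatAntichain i (mem_range_succ_iff.1 hi)).subset A hA
  · intro S hSX hS
    have hD (i : ℕ) (hi : i ≤ t) : D i ⊆ (range (t + 1)).biUnion D :=
      subset_biUnion_of_mem D (mem_range_succ_iff.2 hi)
    have hD' (i : ℕ) (hi : i ≤ t) := (hD i hi).trans (subset_insert S _)
    have hSG := mem_insert_self S ((range (t + 1)).biUnion D)
    rw [hasChainOfLen_succ_iff]
    obtain ⟨A, -, hA⟩ | ⟨A, hA, hAS⟩ :=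
      h.mem_canonRest_succ_or_ssubset hD' hSX hSG (fun i hi hSi => hS (hD i hi hSi)) le_rfl
    · exact ⟨A, hA⟩
    · exact ⟨S, mem_canonRest_succ.2 ⟨hSG, A, h.layered.subset_canonRest hD' le_rfl hA, hAS⟩⟩

end IsSatLayering

/-! ### Complements -/

lemma IsSatAntichain.image_sdiff (h : IsSatAntichain X 𝒜) :
    IsSatAntichain X (𝒜.image (X \ ·)) where
  subset := forall_mem_image.2 fun _ _ => sdiff_subset
  isAntichain := by
    rw [coe_image]
    rintro _ ⟨A, hA, rfl⟩ _ ⟨B, hB, rfl⟩ hne hAB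
    have hBA := (sdiff_subset_sdiff_iff_subset (h.subset A hA) (h.subset B hB)).1 hAB
    exact hne (congrArg (X \ ·) (h.isAntichain.eq hB hA hBA).symm)
  exists_comparable S hS := by
    obtain ⟨A, hA, hcomp⟩ := h.exists_comparable (X \ S) sdiff_subset
    refine ⟨X \ A, mem_image_of_mem _ hA, hcomp.symm.imp ?_ ?_⟩
    · exact sdiff_le_comm.1
    · intro hAS
      exact subset_sdiff.2 ⟨hS, (subset_sdiff.1 hAS).2.symm⟩

/-- The complements in `X` of the members of `D t, …, D 0`; reversing the order makes the sequence
layered again. -/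
def complLayers (X : Finset α) (D : ℕ → Finset (Finset α)) (t i : ℕ) : Finset (Finset α) :=
  (D (t - i)).image (X \ ·)

lemma IsSatLayering.compl (h : IsSatLayering X D t) :
    IsSatLayering X (complLayers X D t) t where
  isSatAntichain i _ := (h.isSatAntichain (t - i) (by omega)).image_sdiff
  layered := by
    refine layered_iff_forall_succ.2 fun i hi => forall_mem_image.2 fun A hA => ?_
    obtain ⟨B, hB, hAB⟩ := h.exists_ssubset_succ (by omega) hA
    rw [show t - (i + 1) + 1 = t - i by omega] at hB
    have hAX := (h.isSatAntichain (t - (i + 1)) (by omega)).subset A hA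
    have hBX := (h.isSatAntichain (t - i) (by omega)).subset B hB
    exact ⟨X \ B, mem_image_of_mem _ hB, sdiff_subset_sdiff Subset.rfl hAB.subset,
      fun hsub => hAB.2 ((sdiff_subset_sdiff_iff_subset hAX hBX).1 hsub)⟩

lemma sum_card_complLayers_le (X : Finset α) (D : ℕ → Finset (Finset α)) (t : ℕ) :
    ∑ i ∈ range (t + 1), #(complLayers X D t i) ≤ ∑ i ∈ range (t + 1), #(D i) := by
  rw [← sum_range_reflect (fun i => #(D i))]
  exact sum_le_sum fun i _ => card_image_le

lemma IsMinSatLayering.compl (h : IsMinSatLayering X D t) :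
    IsMinSatLayering X (complLayers X D t) t where
  toIsSatLayering := h.toIsSatLayering.compl
  sum_card_le E hE :=
    calc ∑ i ∈ range (t + 1), #(complLayers X D t i)
      _ ≤ ∑ i ∈ range (t + 1), #(D i) := sum_card_complLayers_le X D t
      _ ≤ ∑ i ∈ range (t + 1), #(complLayers X E t i) := h.sum_card_le _ hE.compl
      _ ≤ ∑ i ∈ range (t + 1), #(E i) := sum_card_complLayers_le X E t

/-! ### Homogeneous sets -/

/-- Every member of `𝒜` contains all of `H` or none of it: the defining property of a homogeneous
atom without its maximality. -/
def IsHomogeneousFor (𝒜 : Finset (Finset α)) (H : Finset α) : Prop :=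
  ∀ S ∈ 𝒜, S ∩ H = ∅ ∨ S ∩ H = H

lemma mem_smallSets : A ∈ smallSets 𝒜 H ↔ A ∈ 𝒜 ∧ Disjoint A H := by
  simp [smallSets, disjoint_iff_inter_eq_empty]

lemma mem_largeSets : A ∈ largeSets 𝒜 H ↔ A ∈ 𝒜 ∧ H ⊆ A := by
  simp [largeSets]

lemma smallSets_image_sdiff (hHX : H ⊆ X) :
    smallSets (𝒜.image (X \ ·)) H = (largeSets 𝒜 H).image (X \ ·) := by
  rw [smallSets, largeSets, filter_image]
  refine congrArg _ (filter_congr fun A _ => ?_)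
  rw [inter_comm, ← inter_sdiff_assoc, inter_eq_left.2 hHX, sdiff_eq_empty_iff_subset]

lemma largeSets_image_sdiff (hHX : H ⊆ X) :
    largeSets (𝒜.image (X \ ·)) H = (smallSets 𝒜 H).image (X \ ·) := by
  rw [smallSets, largeSets, filter_image]
  refine congrArg _ (filter_congr fun A _ => ?_)
  rw [subset_sdiff, ← disjoint_iff_inter_eq_empty, disjoint_comm, and_iff_right hHX]

lemma card_smallSets_add_card_largeSets_le (hH : H.Nonempty) :
    #(smallSets 𝒜 H) + #(largeSets 𝒜 H) ≤ #𝒜 := by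
  obtain ⟨x, hx⟩ := hH
  have hdisj : Disjoint (smallSets 𝒜 H) (largeSets 𝒜 H) := disjoint_left.2 fun A hA hA' =>
    disjoint_left.1 (mem_smallSets.1 hA).2 ((mem_largeSets.1 hA').2 hx) hx
  rw [← card_union_of_disjoint hdisj]
  exact card_le_card (union_subset (filter_subset _ _) (filter_subset _ _))

namespace IsHomogeneousFor

lemma mono (hF : IsHomogeneousFor F H) (h : 𝒜 ⊆ F) : IsHomogeneousFor 𝒜 H :=
  fun S hS => hF S (h hS)

lemma subset_of_mem (h : IsHomogeneousFor 𝒜 H) (hA : A ∈ 𝒜) {x : α} (hxA : x ∈ A) (hxH : x ∈ H) :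
    H ⊆ A := by
  refine inter_eq_right.1 ((h A hA).resolve_left ?_)
  exact ne_empty_of_mem (mem_inter.2 ⟨hxA, hxH⟩)

lemma disjoint_or_subset (h : IsHomogeneousFor 𝒜 H) (hA : A ∈ 𝒜) : Disjoint A H ∨ H ⊆ A :=
  (h A hA).imp disjoint_iff_inter_eq_empty.2 inter_eq_right.1

lemma image_sdiff (h : IsHomogeneousFor 𝒜 H) (hHX : H ⊆ X) :
    IsHomogeneousFor (𝒜.image (X \ ·)) H := by
  refine forall_mem_image.2 fun A hA => ?_
  rw [← disjoint_iff_inter_eq_empty, inter_eq_right, subset_sdiff]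
  exact (h.disjoint_or_subset hA).symm.imp
    (fun hHA => disjoint_sdiff_self_left.mono_right hHA) (fun hAH => ⟨hHX, hAH.symm⟩)

/-- If `S ∈ F`, take for `T` the set `S` with one point of `H` added if `S` is small, and with one
point of `H` removed if `S` is large. -/
lemma exists_notMem_comparable (hF : IsHomogeneousFor F H) (hHX : H ⊆ X) (hH : H.Nontrivial)
    (hSX : S ⊆ X) :
    ∃ T ⊆ X, T ∉ F ∧ ∀ A ∈ F, A ⊆ T ∨ T ⊆ A → A ⊆ S ∨ S ⊆ A := by
  by_cases hSF : S ∉ F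
  · exact ⟨S, hSX, hSF, fun _ _ h => h⟩
  rw [not_not] at hSF
  obtain ⟨x, hx⟩ := hH.nonempty
  obtain ⟨y, hy, hyx⟩ := hH.exists_ne x
  obtain hS | hS := hF.disjoint_or_subset hSF
  · have hyT : y ∉ insert x S := by
      simpa [hyx] using disjoint_right.1 hS hy
    refine ⟨insert x S, insert_subset (hHX hx) hSX, fun hTF => ?_, fun A hA => Or.imp ?_ ?_⟩
    · exact hyT (hF.subset_of_mem hTF (mem_insert_self x S) hx hy)
    · intro hAT
      refine (subset_insert_iff_of_notMem fun hxA => ?_).1 hAT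
      exact hyT (hAT (hF.subset_of_mem hA hxA hx hy))
    · exact (subset_insert x S).trans
  · have hyT : y ∈ S.erase x := mem_erase.2 ⟨hyx, hS hy⟩
    refine ⟨S.erase x, (erase_subset x S).trans hSX, fun hTF => ?_, fun A hA => Or.imp ?_ ?_⟩
    · exact notMem_erase x S (hF.subset_of_mem hTF hyT hy hx)
    · exact fun hAT => hAT.trans (erase_subset x S)
    · intro hTA
      exact (erase_subset_iff_of_mem (hF.subset_of_mem hA (hTA hyT) hy hx)).1 hTA

end IsHomogeneousFor

/-! ### The canonical decomposition of a saturated system -/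

lemma IsSatKSperner.exists_comparable_chain (h : IsSatKSperner X F k) (hTX : T ⊆ X) (hTF : T ∉ F) :
    ∃ C : Fin k → Finset α, StrictMono C ∧ (∀ j, C j ∈ F) ∧ ∀ j, C j ⊆ T ∨ T ⊆ C j := by
  obtain ⟨-, hno, hsat⟩ := h
  obtain ⟨C, hC, hCF⟩ := hsat T hTX hTF
  obtain ⟨a, rfl⟩ : ∃ a, C a = T := by
    by_contra! hne
    exact hno ⟨C, hC, fun j => mem_of_mem_insert_of_ne (hCF j) (hne j)⟩
  refine ⟨C ∘ a.succAbove, hC.comp (Fin.strictMono_succAbove a), fun j => ?_, fun j => ?_⟩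
  · exact mem_of_mem_insert_of_ne (hCF _) (hC.injective.ne (Fin.succAbove_ne a j))
  · exact (le_total (a.succAbove j) a).imp (hC.monotone ·) (hC.monotone ·)

/-- A chain of `k` members of `F` meets each of the `k` antichains. -/
lemma IsSatKSperner.isSatAntichain_canonDecomp (h : IsSatKSperner X F k)
    (hF : IsHomogeneousFor F H) (hHX : H ⊆ X) (hH : H.Nontrivial) (hi : i < k) :
    IsSatAntichain X (canonDecomp F i) where
  subset A hA := h.1 A (canonDecomp_subset hA)
  isAntichain := isAntichain_canonDecomp
  exists_comparable S hSX := by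
    obtain ⟨T, hTX, hTF, hT⟩ := hF.exists_notMem_comparable hHX hH hSX
    obtain ⟨C, hC, hCF, hCT⟩ := h.exists_comparable_chain hTX hTF
    choose f hf using fun j => exists_mem_canonDecomp h.2.1 (hCF j)
    have hinj : Function.Injective f := injective_of_strictMono_of_isAntichain hC
      (E := fun a : Fin k => canonDecomp F a) (fun _ => isAntichain_canonDecomp) hf
    obtain ⟨j, hj⟩ := Finite.surjective_of_injective hinj ⟨i, hi⟩
    have hCi : C j ∈ canonDecomp F i := by simpa [hj] using hf j
    exact ⟨C j, hCi, hT _ (hCF j) (hCT j)⟩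

theorem IsSatKSperner.isMinSatLayering_canonDecomp (h : IsSatKSperner X F (t + 1))
    (hmin : ∀ G, IsSatKSperner X G (t + 1) → #F ≤ #G)
    (hF : IsHomogeneousFor F H) (hHX : H ⊆ X) (hH : H.Nontrivial) :
    IsMinSatLayering X (canonDecomp F) t where
  layered := layered_canonDecomp F t
  isSatAntichain i hi := h.isSatAntichain_canonDecomp hF hHX hH (by omega)
  sum_card_le E hE :=
    calc ∑ i ∈ range (t + 1), #(canonDecomp F i)
      _ ≤ #F := sum_card_canonDecomp_le F (t + 1)
      _ ≤ #((range (t + 1)).biUnion E) := hmin _ hE.isSatKSperner_biUnion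
      _ ≤ ∑ i ∈ range (t + 1), #(E i) := card_biUnion_le

/-! ### The bottom two layers -/

/-- The antichain formed by `L` and the singletons of the points outside `L`. -/
def insertSingletons (X L : Finset α) : Finset (Finset α) :=
  insert L ((X \ L).image fun x => {x})

lemma mem_insertSingletons :
    A ∈ insertSingletons X L ↔ A = L ∨ ∃ x ∈ X \ L, {x} = A := by
  simp only [insertSingletons, mem_insert, mem_image]

lemma card_insertSingletons_le (X L : Finset α) : #(insertSingletons X L) ≤ #(X \ L) + 1 :=
  (card_insert_le _ _).trans (Nat.add_le_add_right card_image_le 1)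

lemma exists_singleton_mem_insertSingletons (hSX : S ⊆ X) (hSL : ¬ S ⊆ L) :
    ∃ x ∈ S, {x} ∈ insertSingletons X L := by
  obtain ⟨x, hxS, hxL⟩ := not_subset.1 hSL
  exact ⟨x, hxS, mem_insertSingletons.2 (.inr ⟨x, mem_sdiff.2 ⟨hSX hxS, hxL⟩, rfl⟩)⟩

lemma nonempty_of_mem_insertSingletons (hL : L.Nonempty) (hA : A ∈ insertSingletons X L) :
    A.Nonempty := by
  obtain rfl | ⟨x, -, rfl⟩ := mem_insertSingletons.1 hA
  · exact hL
  · exact singleton_nonempty x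

lemma isSatAntichain_insertSingletons (hLX : L ⊆ X) (hL : L.Nonempty) :
    IsSatAntichain X (insertSingletons X L) where
  subset A hA := by
    obtain rfl | ⟨x, hx, rfl⟩ := mem_insertSingletons.1 hA
    · exact hLX
    · exact singleton_subset_iff.2 (mem_sdiff.1 hx).1
  isAntichain A hA B hB hne hAB := by
    obtain rfl | ⟨x, hx, rfl⟩ := mem_insertSingletons.1 hB
    · obtain rfl | ⟨y, hy, rfl⟩ := mem_insertSingletons.1 hA
      · exact hne rfl
      · exact (mem_sdiff.1 hy).2 (singleton_subset_iff.1 hAB)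
    · have hAx := (nonempty_of_mem_insertSingletons hL hA).subset_singleton_iff.1 hAB
      obtain rfl | ⟨y, -, rfl⟩ := mem_insertSingletons.1 hA
      · exact (mem_sdiff.1 hx).2 (hAx ▸ mem_singleton_self x)
      · exact hne hAx
  exists_comparable S hSX := by
    by_cases hSL : S ⊆ L
    · exact ⟨L, mem_insertSingletons.2 (.inl rfl), .inr hSL⟩
    · obtain ⟨x, hxS, hx⟩ := exists_singleton_mem_insertSingletons hSX hSL
      exact ⟨{x}, hx, .inl (singleton_subset_iff.2 hxS)⟩

lemma isSatAntichain_singleton_empty {β : Type*} (X : Finset β) : IsSatAntichain X {∅} where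
  subset := by simp
  isAntichain := by simp
  exists_comparable S _ := ⟨∅, mem_singleton_self ∅, .inl (empty_subset S)⟩

/-- The sequence `D` with its first two families replaced by `{∅}` and `insertSingletons X L`. -/
def replaceBottom (X : Finset α) (D : ℕ → Finset (Finset α)) (L : Finset α) :
    ℕ → Finset (Finset α)
  | 0 => {∅}
  | 1 => insertSingletons X L
  | i + 2 => D (i + 2)

namespace IsSatLayering

lemma nonempty_of_mem_one (h : IsSatLayering X D t) (ht : 1 ≤ t) (hA : A ∈ D 1) : A.Nonempty :=
  card_pos.1 (h.layered.le_card ht hA)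

lemma replaceBottom (h : IsSatLayering X D t) (ht : 1 ≤ t) (hL : L ∈ D 1) :
    IsSatLayering X (replaceBottom X D L) t where
  isSatAntichain
    | 0, _ => isSatAntichain_singleton_empty X
    | 1, _ => isSatAntichain_insertSingletons ((h.isSatAntichain 1 ht).subset L hL)
        (h.nonempty_of_mem_one ht hL)
    | i + 2, hi => h.isSatAntichain (i + 2) hi
  layered := by
    refine layered_iff_forall_succ.2 fun
      | 0, _, A, hA => ⟨∅, mem_singleton_self ∅, empty_ssubset.2
          (nonempty_of_mem_insertSingletons (h.nonempty_of_mem_one ht hL) hA)⟩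
      | 1, hi, A, hA => ?_
      | i + 2, hi, A, hA => layered_iff_forall_succ.1 h.layered (i + 2) hi A hA
    have hAL : ¬ A ⊆ L := fun hAL => by
      obtain ⟨B, hB, hBA⟩ := layered_iff_forall_succ.1 h.layered 1 hi A hA
      have hBL := hBA.trans_subset hAL
      exact hBL.ne ((h.isSatAntichain 1 ht).isAntichain.eq hB hL hBL.subset)
    obtain ⟨x, hxA, hx⟩ :=
      exists_singleton_mem_insertSingletons ((h.isSatAntichain 2 hi).subset A hA) hAL
    refine ⟨{x}, hx, (singleton_subset_iff.2 hxA).ssubset_of_ne ?_⟩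
    rintro rfl
    simpa using h.layered.le_card hi hA

end IsSatLayering

lemma IsMinSatLayering.card_one_le (h : IsMinSatLayering X D t) (ht : 1 ≤ t) (hL : L ∈ D 1) :
    #(D 1) ≤ #(X \ L) + 1 := by
  obtain ⟨s, rfl⟩ := Nat.exists_eq_add_of_le' ht
  obtain ⟨B, hB, -⟩ := layered_iff_forall_succ.1 h.layered 0 ht L hL
  have h0 : 1 ≤ #(D 0) := card_pos.2 ⟨B, hB⟩
  have hbottom : #(D 1) + #(D 0) ≤ #(insertSingletons X L) + 1 := by
    simpa [sum_range_succ', replaceBottom, add_assoc] using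
      h.sum_card_le _ (h.toIsSatLayering.replaceBottom ht hL)
  have hcard := card_insertSingletons_le X L
  omega

lemma IsSatLayering.le_card_sdiff (h : IsSatLayering X D t) (hi : i ≤ t) (hA : A ∈ D i) :
    t - i ≤ #(X \ A) := by
  refine h.compl.layered.le_card (Nat.sub_le t i) (mem_image_of_mem _ ?_)
  rwa [Nat.sub_sub_self hi]

/-! ### Small and large members of a saturated antichain -/

namespace IsSatAntichain

/-- Compare `Y` minus one point of `H` with the antichain; homogeneity restores the point. -/
lemma exists_mem_largeSets_superset (h : IsSatAntichain X 𝒜) (h𝒜 : IsHomogeneousFor 𝒜 H)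
    (hH : H.Nontrivial) {Y : Finset α} (hYX : Y ⊆ X) (hHY : H ⊆ Y)
    (hfree : ∀ A ∈ smallSets 𝒜 H, ¬ A ⊆ Y) : ∃ L ∈ largeSets 𝒜 H, Y ⊆ L := by
  obtain ⟨x, hx⟩ := hH.nonempty
  obtain ⟨y, hy, hyx⟩ := hH.exists_ne x
  obtain ⟨A, hA, hcomp⟩ := h.exists_comparable (Y.erase x) ((erase_subset x Y).trans hYX)
  have hAY : ¬ A ⊆ Y.erase x := fun hAY => by
    obtain hAH | hHA := h𝒜.disjoint_or_subset hA
    · exact hfree A (mem_smallSets.2 ⟨hA, hAH⟩) (hAY.trans (erase_subset x Y))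
    · exact notMem_erase x Y (hAY (hHA hx))
  have hYA := hcomp.resolve_left hAY
  have hHA : H ⊆ A := h𝒜.subset_of_mem hA (hYA (mem_erase.2 ⟨hyx, hHY hy⟩)) hy
  exact ⟨A, mem_largeSets.2 ⟨hA, hHA⟩, (erase_subset_iff_of_mem (hHA hx)).1 hYA⟩

lemma largeSets_nonempty (h : IsSatAntichain X 𝒜) (h𝒜 : IsHomogeneousFor 𝒜 H) (hHX : H ⊆ X)
    (hH : H.Nontrivial) (hne : ∀ A ∈ 𝒜, A.Nonempty) : (largeSets 𝒜 H).Nonempty := by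
  obtain ⟨L, hL, -⟩ := h.exists_mem_largeSets_superset h𝒜 hH hHX Subset.rfl fun A hA hAH => by
    obtain ⟨hA, hdisj⟩ := mem_smallSets.1 hA
    exact (hne A hA).ne_empty (disjoint_self_iff_empty A |>.1 (hdisj.mono_right hAH))
  exact ⟨L, hL⟩

lemma not_subset_of_mem_smallSets (h : IsSatAntichain X 𝒜) (hH : H.Nonempty)
    (hA : A ∈ smallSets 𝒜 H) (hL : L ∈ largeSets 𝒜 H) : ¬ A ⊆ L := by
  intro hAL
  obtain ⟨hA, hdisj⟩ := mem_smallSets.1 hA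
  obtain ⟨hL, hHL⟩ := mem_largeSets.1 hL
  obtain ⟨x, hx⟩ := hH
  exact disjoint_right.1 hdisj hx (h.isAntichain.eq hA hL hAL ▸ hHL hx)

lemma exists_mem_smallSets_subset_insert (h : IsSatAntichain X 𝒜) (h𝒜 : IsHomogeneousFor 𝒜 H)
    (hH : H.Nontrivial) (hL : L ∈ largeSets 𝒜 H) {x : α} (hx : x ∈ X \ L) :
    ∃ A ∈ smallSets 𝒜 H, x ∈ A ∧ A ⊆ insert x L := by
  obtain ⟨hxX, hxL⟩ := mem_sdiff.1 hx
  obtain ⟨hL𝒜, hHL⟩ := mem_largeSets.1 hL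
  by_contra! hnot
  have hfree (A) (hA : A ∈ smallSets 𝒜 H) : ¬ A ⊆ insert x L := fun hAxL =>
    h.not_subset_of_mem_smallSets hH.nonempty hA hL
      ((subset_insert_iff_of_notMem fun hxA => hnot A hA hxA hAxL).1 hAxL)
  obtain ⟨L', hL', hsub⟩ := h.exists_mem_largeSets_superset h𝒜 hH
    (insert_subset hxX (h.subset L hL𝒜)) (hHL.trans (subset_insert x L)) hfree
  have hLL' : L = L' :=
    h.isAntichain.eq hL𝒜 (mem_largeSets.1 hL').1 ((subset_insert x L).trans hsub)
  exact hxL (hLL' ▸ hsub (mem_insert_self x L))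

lemma card_sdiff_le_card_smallSets (h : IsSatAntichain X 𝒜) (h𝒜 : IsHomogeneousFor 𝒜 H)
    (hH : H.Nontrivial) (hL : L ∈ largeSets 𝒜 H) : #(X \ L) ≤ #(smallSets 𝒜 H) := by
  choose! f hf hmem hsub using fun x (hx : x ∈ X \ L) =>
    h.exists_mem_smallSets_subset_insert h𝒜 hH hL hx
  refine card_le_card_of_injOn f hf fun x hx y hy hxy => ?_
  have hxy' : x ∈ insert y L := hsub y hy (hxy ▸ hmem x hx)
  exact (mem_insert.1 hxy').resolve_right (mem_sdiff.1 hx).2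

lemma exists_mem_largeSets_erase_subset (h : IsSatAntichain X 𝒜) (h𝒜 : IsHomogeneousFor 𝒜 H)
    (hHX : H ⊆ X) (hH : H.Nontrivial) (hA : A ∈ smallSets 𝒜 H) {a : α} (ha : a ∈ A) :
    ∃ L ∈ largeSets 𝒜 H, A.erase a ⊆ L := by
  have hA𝒜 := (mem_smallSets.1 hA).1
  have hfree (B) (hB : B ∈ smallSets 𝒜 H) : ¬ B ⊆ H ∪ A.erase a := fun hBA => by
    obtain ⟨hB𝒜, hdisj⟩ := mem_smallSets.1 hB
    have hBA' : B ⊆ A.erase a := hdisj.left_le_of_le_sup_left hBA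
    have hBA_eq : B = A := h.isAntichain.eq hB𝒜 hA𝒜 (hBA'.trans (erase_subset a A))
    exact notMem_erase a A (hBA' (hBA_eq ▸ ha))
  obtain ⟨L, hL, hsub⟩ := h.exists_mem_largeSets_superset h𝒜 hH
    (union_subset hHX ((erase_subset a A).trans (h.subset A hA𝒜))) subset_union_left hfree
  exact ⟨L, hL, subset_union_right.trans hsub⟩

lemma card_le_one_of_mem_smallSets (h : IsSatAntichain X 𝒜) (h𝒜 : IsHomogeneousFor 𝒜 H)
    (hHX : H ⊆ X) (hH : H.Nontrivial) (hlarge : #(largeSets 𝒜 H) ≤ 1)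
    (hA : A ∈ smallSets 𝒜 H) : #A ≤ 1 := by
  by_contra! hcard
  obtain ⟨a, ha, b, hb, hab⟩ := one_lt_card.1 hcard
  obtain ⟨L, hL, haL⟩ := h.exists_mem_largeSets_erase_subset h𝒜 hHX hH hA ha
  obtain ⟨L', hL', hbL⟩ := h.exists_mem_largeSets_erase_subset h𝒜 hHX hH hA hb
  obtain rfl := card_le_one.1 hlarge L hL L' hL'
  have haL' : a ∈ L := hbL (mem_erase.2 ⟨hab, ha⟩)
  exact h.not_subset_of_mem_smallSets hH.nonempty hA hL ((erase_subset_iff_of_mem haL').1 haL)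

end IsSatAntichain

theorem IsMinSatLayering.smallSets_largeSets_one (h : IsMinSatLayering X D t) (ht : 1 ≤ t)
    (hD : IsHomogeneousFor (D 1) H) (hHX : H ⊆ X) (hH : H.Nontrivial) :
    (∀ A ∈ smallSets (D 1) H, #A = 1) ∧ t - 1 ≤ #(smallSets (D 1) H) ∧
      #(largeSets (D 1) H) = 1 := by
  have hsat := h.isSatAntichain 1 ht
  have hne (A) (hA : A ∈ D 1) : A.Nonempty := h.nonempty_of_mem_one ht hA
  obtain ⟨L, hL⟩ := hsat.largeSets_nonempty hD hHX hH hne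
  have hL1 := (mem_largeSets.1 hL).1
  have hsmall := hsat.card_sdiff_le_card_smallSets hD hH hL
  have hlarge : #(largeSets (D 1) H) = 1 := by
    have hpos := card_pos.2 ⟨L, hL⟩
    have hsplit := card_smallSets_add_card_largeSets_le (𝒜 := D 1) hH.nonempty
    have hcard := h.card_one_le ht hL1
    omega
  refine ⟨fun A hA => ?_, (h.le_card_sdiff ht hL1).trans hsmall, hlarge⟩
  exact (hsat.card_le_one_of_mem_smallSets hD hHX hH hlarge.le hA).antisymm
    (hne A (mem_smallSets.1 hA).1).card_pos

theorem IsMinSatLayering.largeSets_smallSets_pred (h : IsMinSatLayering X D t) (ht : 1 ≤ t)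
    (hD : IsHomogeneousFor (D (t - 1)) H) (hHX : H ⊆ X) (hH : H.Nontrivial) :
    (∀ A ∈ largeSets (D (t - 1)) H, #A = #X - 1) ∧ t - 1 ≤ #(largeSets (D (t - 1)) H) ∧
      #(smallSets (D (t - 1)) H) = 1 := by
  have hsubset := (h.isSatAntichain (t - 1) (Nat.sub_le t 1)).subset
  have hinj : Set.InjOn (X \ ·) (smallSets (D (t - 1)) H : Set (Finset α)) := fun A hA B hB hAB =>
    (sdiff_right_inj (hsubset A (mem_smallSets.1 hA).1) (hsubset B (mem_smallSets.1 hB).1)).1 hAB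
  obtain ⟨hcard, hlarge, hsmall⟩ :=
    h.compl.smallSets_largeSets_one ht (hD.image_sdiff hHX) hHX hH
  rw [complLayers, smallSets_image_sdiff hHX] at hcard hlarge
  simp only [complLayers, largeSets_image_sdiff hHX,
    card_image_of_injOn hinj, forall_mem_image] at hcard hlarge hsmall
  refine ⟨fun A hA => ?_, hlarge.trans card_image_le, hsmall⟩
  have hAX := hsubset A (mem_largeSets.1 hA).1
  have hA1 := hcard hA
  rw [card_sdiff_of_subset hAX] at hA1
  have hle := card_le_card hAX
  omega

theorem first_and_last_antichains_general (hk : 2 ≤ k) (hsat : IsSatKSperner X F k)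
    (hmin : ∀ G, IsSatKSperner X G k → #F ≤ #G) (hHX : H ⊆ X) (hF : IsHomogeneousFor F H)
    (hH : H.Nontrivial) :
    (∀ A ∈ smallSets (canonDecomp F 1) H, #A = 1) ∧
      k - 2 ≤ #(smallSets (canonDecomp F 1) H) ∧
      #(largeSets (canonDecomp F 1) H) = 1 ∧
      (∀ A ∈ largeSets (canonDecomp F (k - 2)) H, #A = #X - 1) ∧
      k - 2 ≤ #(largeSets (canonDecomp F (k - 2)) H) ∧
      #(smallSets (canonDecomp F (k - 2)) H) = 1 := by
  obtain ⟨t, rfl⟩ := Nat.exists_eq_add_of_le' (one_le_two.trans hk)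
  have ht : 1 ≤ t := Nat.le_of_succ_le_succ hk
  have h := hsat.isMinSatLayering_canonDecomp hmin hF hHX hH
  obtain ⟨hsmall, hsmall_card, hlarge_card⟩ :=
    h.smallSets_largeSets_one ht (hF.mono canonDecomp_subset) hHX hH
  exact ⟨hsmall, hsmall_card, hlarge_card,
    h.largeSets_smallSets_pred ht (hF.mono canonDecomp_subset) hHX hH⟩

end

theorem first_and_last_antichains {α : Type*} [DecidableEq α]
    (X : Finset α) (F : Finset (Finset α)) (k n : ℕ) (hk : 2 ≤ k)
    (hn : X.card = n) (hbig : 2 ^ F.card < n)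
    (hsat : IsSatKSperner X F k)
    (hmin : ∀ G : Finset (Finset α), IsSatKSperner X G k → F.card ≤ G.card)
    (H : Finset α) (hH : IsHomogAtom X F H) :
    (∀ A ∈ smallSets (canonDecomp F 1) H, A.card = 1) ∧
      k - 2 ≤ (smallSets (canonDecomp F 1) H).card ∧
      (largeSets (canonDecomp F 1) H).card = 1 ∧
      (∀ A ∈ largeSets (canonDecomp F (k - 2)) H, A.card = n - 1) ∧
      k - 2 ≤ (largeSets (canonDecomp F (k - 2)) H).card ∧
      (smallSets (canonDecomp F (k - 2)) H).card = 1 :=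
  hn ▸ first_and_last_antichains_general hk hsat hmin hH.1 hH.2.1
    (one_lt_card_iff_nontrivial.1 hH.2.2.2)
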